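/- If A is an n-by-n complex matrix which is unitarily similar to −A, then d(A) ≥ ⌈n/2⌉. Moreover, in this case, d(A) = ⌈n/2⌉ if and only if dim ker(Re(e^{−iθ₀}A)) ≤ 1 for some real θ₀. -/

import Mathlib

open Matrix Polynomial

noncomputable def zdi {m : Type*} [Fintype m] (A : Matrix m m ℂ) : ℕ :=
  sSup {k : ℕ | ∃ V : Matrix m (Fin k) ℂ, Vᴴ * V = 1 ∧ Vᴴ * A * V = 0}

noncomputable def matRe {m : Type*} (A : Matrix m m ℂ) : Matrix m m ℂ :=
  (2⁻¹ : ℂ) • (A + Aᴴ)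

noncomputable def iNonneg {m : Type*} [Fintype m] [DecidableEq m] (M : Matrix m m ℂ) : ℕ :=
  if hM : M.IsHermitian then (Finset.univ.filter fun i => 0 ≤ hM.eigenvalues i).card else 0

def numRange {m : Type*} [Fintype m] (A : Matrix m m ℂ) : Set ℂ :=
  {z | ∃ x : m → ℂ, star x ⬝ᵥ x = 1 ∧ star x ⬝ᵥ A.mulVec x = z}

noncomputable def arg2pi (z : ℂ) : ℝ :=
  if 0 ≤ Complex.arg z then Complex.arg z else Complex.arg z + 2 * Real.pi

def UnitSim {m : Type*} [Fintype m] [DecidableEq m] (A B : Matrix m m ℂ) : Prop :=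
  ∃ U ∈ Matrix.unitaryGroup m ℂ, Uᴴ * A * U = B

def UnitSimG {m l : Type*} [Fintype m] [DecidableEq m] [Fintype l] [DecidableEq l]
    (A : Matrix m m ℂ) (B : Matrix l l ℂ) : Prop :=
  ∃ e : m ≃ l, UnitSim (Matrix.reindex e e A) B

def superMat (n : ℕ) (w : ℕ → ℂ) : Matrix (Fin n) (Fin n) ℂ :=
  Matrix.of fun i j => if (j : ℕ) = (i : ℕ) + 1 then w (i : ℕ) else 0

def cycMat (n : ℕ) (w : ℕ → ℂ) : Matrix (Fin n) (Fin n) ℂ :=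
  Matrix.of fun i j => if (j : ℕ) = ((i : ℕ) + 1) % n then w (i : ℕ) else 0

/-!
If `AU = -UA` with `U` unitary, then `A` exchanges the spectral subspace `P` of `U` for a half-plane
with its orthogonal complement. Both `P` and `Pᗮ` are then isotropic for `A`, and the larger one,
say `P`, gives the lower bound.

A subspace isotropic for `A` is isotropic for every Hermitian `G = cA + (cA)*`, hence has dimension
at most `(n + dim ker G) / 2`. So a single kernel of dimension at most one forces equality.

Conversely, suppose `dim P = ⌈n/2⌉` and every `ker G` has dimension at least two. In the blocks
`P ⊕ Pᗮ` each `G` is off-diagonal, and the dimension count forces `ker G` to meet `Pᗮ`, so for each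
unit `ω` there is a nonzero `b ∈ Pᗮ` with `Ab = ωA*b`. As there are infinitely many `ω`, some
`S ≤ Pᗮ` satisfies `AS ≤ A*S ≤ P` and `dim A*S < dim S`. Then `S ⊕ (P ⊖ A*S)` is isotropic of
dimension larger than `dim P`.
-/

open Module Module.End

section Pencil

variable {K V W : Type*} [Field K] [AddCommGroup V] [Module K V] [FiniteDimensional K V]
  [AddCommGroup W] [Module K W]

-- If `D` were injective on the span of all pencil eigenvectors, `D⁻¹T` would have infinitely many
-- eigenvalues there.
theorem exists_le_finrank_map_lt_of_infinite_pencil (T D : V →ₗ[K] W) (Q : Submodule K V)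
    {s : Set K} (hs : s.Infinite) (h : ∀ μ ∈ s, ∃ v ∈ Q, v ≠ 0 ∧ T v = μ • D v) :
    ∃ S ≤ Q, S.map T ≤ S.map D ∧ finrank K (S.map D) < finrank K S := by
  let S : Submodule K V := Submodule.span K {v | v ∈ Q ∧ ∃ μ : K, T v = μ • D v}
  have hTS : S.map T ≤ S.map D := by
    rw [Submodule.map_span_le]
    rintro v ⟨hvQ, μ, hv⟩
    rw [hv]
    exact Submodule.smul_mem _ _ (Submodule.mem_map_of_mem (Submodule.subset_span ⟨hvQ, μ, hv⟩))
  refine ⟨S, Submodule.span_le.2 fun v hv => hv.1, hTS, ?_⟩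
  by_contra! hle
  have hsurj := D.submoduleMap_surjective S
  have hinj := (LinearMap.injective_iff_surjective_of_finrank_eq_finrank
    (hle.antisymm (Submodule.finrank_map_le D S))).2 hsurj
  let e : S ≃ₗ[K] S.map D := .ofBijective (D.submoduleMap S) ⟨hinj, hsurj⟩
  let R : End K S := e.symm ∘ₗ T.restrict fun v hv => hTS (Submodule.mem_map_of_mem hv)
  refine hs (R.finite_hasEigenvalue.subset fun μ hμ => ?_)
  obtain ⟨v, hvQ, hv0, hv⟩ := h μ hμ
  refine hasEigenvalue_of_hasEigenvector (x := ⟨v, Submodule.subset_span ⟨hvQ, μ, hv⟩⟩)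
    ⟨mem_eigenspace_iff.2 ?_, fun h0 => hv0 (congrArg Subtype.val h0)⟩
  rw [LinearMap.comp_apply, LinearEquiv.coe_coe, e.symm_apply_eq, map_smul]
  exact Subtype.ext hv

end Pencil

section Complex

theorem infinite_sphere_zero_one : (Metric.sphere (0 : ℂ) 1).Infinite := by
  refine (isPreconnected_sphere (by simp) 0 1).infinite_of_nontrivial ⟨1, by simp, -1, by simp, ?_⟩
  norm_num

theorem arg_neg_pos_iff {z : ℂ} (hz : z ≠ 0) : 0 < Complex.arg (-z) ↔ ¬ 0 < Complex.arg z := by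
  rcases lt_trichotomy z.im 0 with him | him | him
  · have hneg := Complex.arg_neg_iff.2 him
    rw [Complex.arg_neg_eq_arg_add_pi_of_im_neg him]
    simp [hneg.le, ← neg_lt_iff_pos_add, Complex.neg_pi_lt_arg]
  · obtain ⟨x, rfl⟩ : ∃ x : ℝ, (x : ℂ) = z := ⟨z.re, Complex.ext rfl him.symm⟩
    rw [← Complex.ofReal_neg]
    rcases lt_or_gt_of_ne (Complex.ofReal_ne_zero.1 hz) with hx | hx
    · rw [Complex.arg_ofReal_of_neg hx, Complex.arg_ofReal_of_nonneg (neg_nonneg.2 hx.le)]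
      simp [Real.pi_pos]
    · rw [Complex.arg_ofReal_of_nonneg hx.le, Complex.arg_ofReal_of_neg (neg_lt_zero.2 hx)]
      simp [Real.pi_pos]
  · have hpos : 0 < z.arg := (Complex.arg_nonneg_iff.2 him.le).lt_of_ne fun h =>
      him.ne' (Complex.arg_eq_zero_iff.1 h.symm).2
    rw [Complex.arg_neg_eq_arg_sub_pi_of_im_pos him]
    simp [hpos, Complex.arg_le_pi]

theorem exists_norm_eq_one_conj_eq_neg_mul {ω : ℂ} (hω : ‖ω‖ = 1) :
    ∃ c : ℂ, ‖c‖ = 1 ∧ starRingEnd ℂ c = -(ω * c) := by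
  obtain ⟨c, hc⟩ := IsAlgClosed.exists_pow_nat_eq (-starRingEnd ℂ ω) two_pos
  have hc1 : ‖c‖ = 1 := by
    rw [← pow_eq_one_iff_of_nonneg (norm_nonneg c) two_ne_zero, ← norm_pow, hc, norm_neg,
      RCLike.norm_conj, hω]
  have hc0 : c ≠ 0 := norm_ne_zero_iff.1 (by simp [hc1])
  refine ⟨c, hc1, mul_right_cancel₀ hc0 ?_⟩
  rw [Complex.conj_mul', hc1, neg_mul, mul_assoc, ← sq, hc, mul_neg, neg_neg, Complex.mul_conj', hω]

end Complex

section Orthogonal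

variable {𝕜 E : Type*} [RCLike 𝕜] [NormedAddCommGroup E] [InnerProductSpace 𝕜 E]

theorem orthogonal_eq_of_isOrtho_of_sup_eq_top {P Q : Submodule 𝕜 E} (h : P ⟂ Q)
    (htop : P ⊔ Q = ⊤) : Pᗮ = Q :=
  (eq_of_le_of_inf_le_of_sup_le (z := P) h.ge (by simp [inf_comm, P.inf_orthogonal_eq_bot])
    (by simp [sup_comm Q, htop])).symm

theorem isOrtho_eigenspace (U : E →ₗᵢ[𝕜] E) {μ ν : 𝕜} (hne : μ ≠ ν) :
    eigenspace U.toLinearMap μ ⟂ eigenspace U.toLinearMap ν := by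
  refine Submodule.isOrtho_iff_inner_eq.2 fun x hx y hy => ?_
  replace hx : U x = μ • x := mem_eigenspace_iff.1 hx
  replace hy : U y = ν • y := mem_eigenspace_iff.1 hy
  rcases eq_or_ne x 0 with rfl | hx0
  · exact inner_zero_left y
  have hμ : starRingEnd 𝕜 μ * μ = 1 := by
    have := U.inner_map_map x x
    rw [hx, inner_smul_left, inner_smul_right, ← mul_assoc] at this
    exact (mul_eq_right₀ (inner_self_ne_zero.2 hx0)).1 this
  by_contra hxy
  have hν : starRingEnd 𝕜 μ * ν = 1 := by
    have := U.inner_map_map x y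
    rw [hx, hy, inner_smul_left, inner_smul_right, ← mul_assoc] at this
    exact (mul_eq_right₀ hxy).1 this
  exact hne (mul_left_cancel₀ (left_ne_zero_of_mul_eq_one hμ) (hμ.trans hν.symm))

variable [FiniteDimensional 𝕜 E]

theorem isSemisimple_linearIsometryEquiv (U : E ≃ₗᵢ[𝕜] E) :
    IsSemisimple (U.toLinearEquiv : End 𝕜 E) := by
  refine isSemisimple_iff.2 fun p hp => ⟨pᗮ, ?_, p.isCompl_orthogonal⟩
  have hmap : p.map (U.toLinearEquiv : End 𝕜 E) = p :=
    Submodule.eq_of_le_of_finrank_eq ((mem_invtSubmodule_iff_map_le _).1 hp)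
      (U.toLinearEquiv.finrank_map_eq p)
  rw [mem_invtSubmodule_iff_map_le, p.map_orthogonal_equiv U, hmap]

end Orthogonal

section Spectral

variable {E : Type*} [NormedAddCommGroup E] [InnerProductSpace ℂ E] [FiniteDimensional ℂ E]

theorem orthogonal_iSup_eigenspace (U : E ≃ₗᵢ[ℂ] E) (s : Set ℂ) :
    (⨆ μ ∈ s, eigenspace (U.toLinearEquiv : End ℂ E) μ)ᗮ =
      ⨆ μ ∈ sᶜ, eigenspace (U.toLinearEquiv : End ℂ E) μ := by
  refine orthogonal_eq_of_isOrtho_of_sup_eq_top ?_ ?_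
  · simp only [Submodule.isOrtho_iSup_left, Submodule.isOrtho_iSup_right]
    intro μ hμ ν hν
    exact isOrtho_eigenspace U.toLinearIsometry fun h => hμ (h ▸ hν)
  · rw [← iSup_union, Set.union_compl_self, iSup_univ,
      (isSemisimple_linearIsometryEquiv U).iSup_eigenspace_eq_top]

end Spectral

section Isotropic

variable {𝕜 E : Type*} [RCLike 𝕜] [NormedAddCommGroup E] [InnerProductSpace 𝕜 E]

/-- A subspace `S` is isotropic for `T` if the sesquilinear form `⟪x, T y⟫` vanishes on it, i.e. if
the compression of `T` to `S` is zero. -/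
def IsIsotropic (T : E →ₗ[𝕜] E) (S : Submodule 𝕜 E) : Prop :=
  ∀ x ∈ S, T x ∈ Sᗮ

namespace IsIsotropic

variable {T T' : E →ₗ[𝕜] E} {P S W : Submodule 𝕜 E}

theorem mono (h : IsIsotropic T W) (hSW : S ≤ W) : IsIsotropic T S :=
  fun x hx => Submodule.orthogonal_le hSW (h x (hSW hx))

theorem add (h : IsIsotropic T S) (h' : IsIsotropic T' S) : IsIsotropic (T + T') S :=
  fun x hx => add_mem (h x hx) (h' x hx)

theorem smul (h : IsIsotropic T S) (c : 𝕜) : IsIsotropic (c • T) S :=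
  fun x hx => Submodule.smul_mem _ c (h x hx)

theorem map_orthogonal_le [P.HasOrthogonalProjection] (h : IsIsotropic T Pᗮ) : Pᗮ.map T ≤ P := by
  rw [IsIsotropic, P.orthogonal_orthogonal] at h
  exact Submodule.map_le_iff_le_comap.2 h

theorem ker_le_of_disjoint_orthogonal [P.HasOrthogonalProjection] (hP : IsIsotropic T P)
    (hP' : IsIsotropic T Pᗮ) (hker : Disjoint (LinearMap.ker T) Pᗮ) : LinearMap.ker T ≤ P := by
  intro x hx
  obtain ⟨a, ha, b, hb, rfl⟩ := P.exists_add_mem_mem_orthogonal x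
  rw [LinearMap.mem_ker, map_add] at hx
  have hTb : T b ∈ Pᗮ := eq_neg_of_add_eq_zero_right hx ▸ neg_mem (hP a ha)
  have hb0 : b = 0 := Submodule.disjoint_def.1 hker b
    (Submodule.disjoint_def.1 P.orthogonal_disjoint _
      (hP'.map_orthogonal_le (Submodule.mem_map_of_mem hb)) hTb) hb
  rwa [hb0, add_zero]

variable [FiniteDimensional 𝕜 E]

theorem adjoint (h : IsIsotropic T S) : IsIsotropic T.adjoint S := by
  intro x hx
  rw [Submodule.mem_orthogonal]
  intro y hy
  rw [LinearMap.adjoint_inner_right]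
  exact Submodule.inner_left_of_mem_orthogonal hx (h y hy)

theorem smul_add_adjoint (h : IsIsotropic T S) (c : 𝕜) :
    IsIsotropic (c • T + (c • T).adjoint) S :=
  (h.smul c).add (h.smul c).adjoint

theorem sup (hS : IsIsotropic T S) (hW : IsIsotropic T W) (hT : S.map T ⟂ W)
    (hT' : S.map T.adjoint ⟂ W) : IsIsotropic T (S ⊔ W) := by
  intro x hx
  obtain ⟨s, hs, w, hw, rfl⟩ := Submodule.mem_sup.1 hx
  have hTw : T w ∈ Sᗮ := by
    rw [Submodule.mem_orthogonal]
    intro u hu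
    rw [← LinearMap.adjoint_inner_left]
    exact hT'.inner_eq (Submodule.mem_map_of_mem hu) hw
  rw [← Submodule.inf_orthogonal, map_add]
  exact add_mem ⟨hS s hs, hT.le (Submodule.mem_map_of_mem hs)⟩ ⟨hTw, hW w hw⟩

theorem two_mul_finrank_le (h : IsIsotropic T S) :
    2 * finrank 𝕜 S ≤ finrank 𝕜 E + finrank 𝕜 (LinearMap.ker T) := by
  have hmap : finrank 𝕜 (S.map T) ≤ finrank 𝕜 Sᗮ :=
    Submodule.finrank_mono (Submodule.map_le_iff_le_comap.2 h)
  have hker : finrank 𝕜 (LinearMap.ker (T.domRestrict S)) ≤ finrank 𝕜 (LinearMap.ker T) := by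
    rw [LinearMap.ker_domRestrict, ← Submodule.finrank_map_subtype_eq S]
    exact Submodule.finrank_mono (Submodule.map_comap_le _ _)
  have hrank := LinearMap.finrank_range_add_finrank_ker (T.domRestrict S)
  rw [LinearMap.range_domRestrict] at hrank
  have := S.finrank_add_finrank_orthogonal
  omega

theorem finrank_ker_add_finrank_orthogonal_le (hT : T.IsSymmetric) (hP : IsIsotropic T P)
    (hP' : IsIsotropic T Pᗮ) (hker : Disjoint (LinearMap.ker T) Pᗮ) :
    finrank 𝕜 (LinearMap.ker T) + finrank 𝕜 Pᗮ ≤ finrank 𝕜 P := by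
  have hker_le : LinearMap.ker T ≤ (Pᗮ.map T)ᗮ ⊓ P := by
    refine le_inf ?_ (hP.ker_le_of_disjoint_orthogonal hP' hker)
    calc LinearMap.ker T = (LinearMap.range T)ᗮ := by rw [T.orthogonal_range, hT.adjoint_eq]
      _ ≤ (Pᗮ.map T)ᗮ := Submodule.orthogonal_le LinearMap.map_le_range
  have hfinrank : finrank 𝕜 (Pᗮ.map T) = finrank 𝕜 Pᗮ := by
    rw [← LinearMap.range_domRestrict]
    exact LinearMap.finrank_range_of_inj (LinearMap.injective_domRestrict_iff.2 hker.symm)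
  have := Submodule.finrank_mono hker_le
  have := Submodule.finrank_add_inf_finrank_orthogonal hP'.map_orthogonal_le
  omega

end IsIsotropic

theorem isIsotropic_range_iff {F : Type*} [NormedAddCommGroup F] [InnerProductSpace 𝕜 F]
    [FiniteDimensional 𝕜 E] [FiniteDimensional 𝕜 F] {T : E →ₗ[𝕜] E} {V : F →ₗ[𝕜] E} :
    IsIsotropic T (LinearMap.range V) ↔ V.adjoint ∘ₗ T ∘ₗ V = 0 := by
  simp [IsIsotropic, V.orthogonal_range, LinearMap.ext_iff]

end Isotropic

section Split

variable {E : Type*} [NormedAddCommGroup E] [InnerProductSpace ℂ E] [FiniteDimensional ℂ E]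
  {T : E →ₗ[ℂ] E}

theorem exists_isIsotropic_and_orthogonal_of_anticommute (U : E ≃ₗᵢ[ℂ] E)
    (h : ∀ x, T (U x) = -U (T x)) :
    ∃ P : Submodule ℂ E, IsIsotropic T P ∧ IsIsotropic T Pᗮ := by
  let V (μ : ℂ) : Submodule ℂ E := eigenspace (U.toLinearEquiv : End ℂ E) μ
  have hV0 : V 0 = ⊥ := by
    simp [V, eigenspace_zero]
  have hVT (μ : ℂ) : V μ ≤ (V (-μ)).comap T := by
    intro x hx
    replace hx : U x = μ • x := mem_eigenspace_iff.1 hx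
    refine mem_eigenspace_iff.2 ?_
    change U (T x) = -μ • T x
    rw [neg_smul, ← map_smul, ← hx, h, neg_neg]
  have hVs (s t : Set ℂ) (hst : ∀ μ ∈ s, μ ≠ 0 → -μ ∈ t) :
      ⨆ μ ∈ s, V μ ≤ (⨆ μ ∈ t, V μ).comap T := by
    refine iSup₂_le fun μ hμ => ?_
    rcases eq_or_ne μ 0 with rfl | h0
    · simp [hV0]
    · exact (hVT μ).trans (Submodule.comap_mono (le_biSup V (hst μ hμ h0)))
  let H : Set ℂ := {μ | 0 < Complex.arg μ}
  refine ⟨⨆ μ ∈ H, V μ, ?_, ?_⟩ <;> unfold IsIsotropic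
  · rw [orthogonal_iSup_eigenspace]
    exact hVs H Hᶜ fun μ hμ h0 => by simpa [H, -not_lt, arg_neg_pos_iff h0] using hμ
  · rw [Submodule.orthogonal_orthogonal, orthogonal_iSup_eigenspace]
    exact hVs Hᶜ H fun μ hμ h0 => (arg_neg_pos_iff h0).2 hμ

namespace IsIsotropic

variable {P : Submodule ℂ E}

theorem exists_mem_orthogonal_apply_eq_smul_adjoint (hP : IsIsotropic T P)
    (hP' : IsIsotropic T Pᗮ) (hdim : finrank ℂ P ≤ finrank ℂ Pᗮ + 1)
    (hker : ∀ c : ℂ, ‖c‖ = 1 → 1 < finrank ℂ (LinearMap.ker (c • T + (c • T).adjoint)))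
    {ω : ℂ} (hω : ‖ω‖ = 1) : ∃ b ∈ Pᗮ, b ≠ 0 ∧ T b = ω • T.adjoint b := by
  obtain ⟨c, hc, hcω⟩ := exists_norm_eq_one_conj_eq_neg_mul hω
  have hsymm : (c • T + (c • T).adjoint).IsSymmetric :=
    (LinearMap.isSymmetric_iff_isSelfAdjoint _).2 (IsSelfAdjoint.add_star_self (c • T))
  have hndisj : ¬ Disjoint (LinearMap.ker (c • T + (c • T).adjoint)) Pᗮ := fun hdisj => by
    have := finrank_ker_add_finrank_orthogonal_le hsymm
      (hP.smul_add_adjoint c) (hP'.smul_add_adjoint c) hdisj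
    have := hker c hc
    omega
  obtain ⟨b, hbker, hbP, hb0⟩ := by simpa [Submodule.disjoint_def] using hndisj
  refine ⟨b, hbP, hb0, ?_⟩
  have hc0 : c ≠ 0 := norm_ne_zero_iff.1 (by simp [hc])
  refine smul_right_injective E hc0 ?_
  simpa [map_smulₛₗ, hcω, smul_smul, mul_comm c, add_neg_eq_zero] using hbker

theorem exists_finrank_lt (hP : IsIsotropic T P) (hP' : IsIsotropic T Pᗮ)
    (hdim : finrank ℂ P ≤ finrank ℂ Pᗮ + 1)
    (hker : ∀ c : ℂ, ‖c‖ = 1 → 1 < finrank ℂ (LinearMap.ker (c • T + (c • T).adjoint))) :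
    ∃ S : Submodule ℂ E, IsIsotropic T S ∧ finrank ℂ P < finrank ℂ S := by
  obtain ⟨S, hSP, hTS, hlt⟩ := exists_le_finrank_map_lt_of_infinite_pencil T T.adjoint Pᗮ
    infinite_sphere_zero_one fun ω hω =>
      hP.exists_mem_orthogonal_apply_eq_smul_adjoint hP' hdim hker (mem_sphere_zero_iff_norm.1 hω)
  set D := S.map T.adjoint
  have hDP : D ≤ P := (Submodule.map_mono hSP).trans hP'.adjoint.map_orthogonal_le
  have hD : D ⟂ Dᗮ ⊓ P := D.isOrtho_orthogonal_right.mono_right inf_le_left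
  refine ⟨S ⊔ Dᗮ ⊓ P, (hP'.mono hSP).sup (hP.mono inf_le_right) (hD.mono_left hTS) hD, ?_⟩
  have hdisj : S ⊓ (Dᗮ ⊓ P) = ⊥ :=
    (P.orthogonal_disjoint.symm.mono hSP inf_le_right).eq_bot
  have hsup := Submodule.finrank_sup_add_finrank_inf_eq S (Dᗮ ⊓ P)
  rw [hdisj, finrank_bot] at hsup
  have := Submodule.finrank_add_inf_finrank_orthogonal hDP
  omega

end IsIsotropic

end Split

section Matrix

variable {𝕜 m : Type*} [RCLike 𝕜] [Fintype m] [DecidableEq m]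

theorem exists_compression_eq_zero_iff {A : Matrix m m 𝕜} {k : ℕ} :
    (∃ V : Matrix m (Fin k) 𝕜, Vᴴ * V = 1 ∧ Vᴴ * A * V = 0) ↔
      ∃ S, IsIsotropic (toEuclideanLin A) S ∧ finrank 𝕜 S = k := by
  have hone (V : Matrix m (Fin k) 𝕜) : Vᴴ * V = 1 ↔
      (toEuclideanLin V).adjoint ∘ₗ toEuclideanLin V = LinearMap.id := by
    rw [← toEuclideanLin_conjTranspose_eq_adjoint, ← toLpLin_mul_same, ← toLpLin_one,
      toEuclideanLin.injective.eq_iff]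
  have hzero (V : Matrix m (Fin k) 𝕜) : Vᴴ * A * V = 0 ↔
      IsIsotropic (toEuclideanLin A) (LinearMap.range (toEuclideanLin V)) := by
    rw [isIsotropic_range_iff, ← toEuclideanLin_conjTranspose_eq_adjoint, ← toLpLin_mul_same,
      ← toLpLin_mul_same, ← Matrix.mul_assoc, map_eq_zero_iff _ toEuclideanLin.injective]
  simp only [hone, hzero]
  constructor
  · rintro ⟨V, hV, hA⟩
    refine ⟨_, hA, ?_⟩
    rw [LinearMap.finrank_range_of_inj (LinearMap.injective_of_comp_eq_id _ _ hV),
      finrank_euclideanSpace_fin]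
  · rintro ⟨S, hS, rfl⟩
    let W := S.subtypeₗᵢ.comp (stdOrthonormalBasis 𝕜 S).repr.symm.toLinearIsometry
    have hrange : LinearMap.range W.toLinearMap = S :=
      (LinearMap.range_comp_of_range_eq_top S.subtype (LinearEquiv.range _)).trans S.range_subtype
    refine ⟨toEuclideanLin.symm W.toLinearMap, ?_, ?_⟩ <;> rw [LinearEquiv.apply_symm_apply]
    · refine LinearMap.ext fun x => ext_inner_left 𝕜 fun y => ?_
      rw [LinearMap.comp_apply, LinearMap.adjoint_inner_right]
      exact W.inner_map_map y x
    · rwa [hrange]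

theorem finrank_ker_mulVecLin (M : Matrix m m 𝕜) :
    finrank 𝕜 (LinearMap.ker M.mulVecLin) = finrank 𝕜 (LinearMap.ker (toEuclideanLin M)) := by
  have hmap : LinearMap.ker (toEuclideanLin M) =
      (LinearMap.ker M.mulVecLin).map (WithLp.linearEquiv 2 𝕜 (m → 𝕜)).symm.toLinearMap := by
    ext x
    simp [Submodule.mem_map_equiv, toLpLin_apply]
  rw [hmap, LinearEquiv.finrank_map_eq]

theorem isGreatest_zdi (A : Matrix m m ℂ) :
    IsGreatest {k | ∃ S, IsIsotropic (toEuclideanLin A) S ∧ finrank ℂ S = k} (zdi A) := by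
  have hbdd : BddAbove {k | ∃ S, IsIsotropic (toEuclideanLin A) S ∧ finrank ℂ S = k} := by
    refine ⟨Fintype.card m, ?_⟩
    rintro _ ⟨S, -, rfl⟩
    simpa using S.finrank_le
  have hne : {k | ∃ S, IsIsotropic (toEuclideanLin A) S ∧ finrank ℂ S = k}.Nonempty :=
    ⟨0, ⊥, by simp [IsIsotropic], finrank_bot _ _⟩
  simp_rw [zdi, exists_compression_eq_zero_iff]
  exact ⟨Nat.sSup_mem hne hbdd, fun k hk => le_csSup hbdd hk⟩

theorem finrank_ker_matRe_smul (A : Matrix m m ℂ) (c : ℂ) :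
    finrank ℂ (LinearMap.ker (matRe (c • A)).mulVecLin) =
      finrank ℂ (LinearMap.ker (c • toEuclideanLin A + (c • toEuclideanLin A).adjoint)) := by
  rw [finrank_ker_mulVecLin, matRe, map_smul, map_add, toEuclideanLin_conjTranspose_eq_adjoint,
    LinearMap.ker_smul _ _ (by norm_num), map_smul]

theorem UnitSim.exists_isIsotropic_finrank_orthogonal_le {A : Matrix m m ℂ}
    (h : UnitSim A (-A)) :
    ∃ P, IsIsotropic (toEuclideanLin A) P ∧ IsIsotropic (toEuclideanLin A) Pᗮ ∧
      finrank ℂ Pᗮ ≤ finrank ℂ P := by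
  obtain ⟨U, hU, hUA⟩ := h
  have hAU : A * U = -(U * A) := by
    rw [← Matrix.mul_neg, ← hUA, ← Matrix.mul_assoc, ← Matrix.mul_assoc,
      ← star_eq_conjTranspose, mem_unitaryGroup_iff.1 hU, Matrix.one_mul]
  let V : EuclideanSpace ℂ m ≃ₗᵢ[ℂ] EuclideanSpace ℂ m :=
    Unitary.linearIsometryEquiv ⟨toEuclideanCLM (𝕜 := ℂ) U, Unitary.map_mem _ hU⟩
  have hAV (x : EuclideanSpace ℂ m) : toEuclideanLin A (V x) = -V (toEuclideanLin A x) := by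
    change (toEuclideanLin A ∘ₗ toEuclideanLin U) x = -(toEuclideanLin U ∘ₗ toEuclideanLin A) x
    rw [← toLpLin_mul_same, ← toLpLin_mul_same, hAU, map_neg, LinearMap.neg_apply]
  obtain ⟨P, hP, hP'⟩ := exists_isIsotropic_and_orthogonal_of_anticommute V hAV
  rcases le_total (finrank ℂ Pᗮ) (finrank ℂ P) with hle | hle
  · exact ⟨P, hP, hP', hle⟩
  · exact ⟨Pᗮ, hP', by rwa [P.orthogonal_orthogonal], by rwa [P.orthogonal_orthogonal]⟩

theorem zdi_ge_ceil_half_of_unitarily_similar_neg_general (A : Matrix m m ℂ)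
    (h : UnitSim A (-A)) :
    (Fintype.card m + 1) / 2 ≤ zdi A ∧
    (zdi A = (Fintype.card m + 1) / 2 ↔ ∃ θ₀ : ℝ,
      finrank ℂ
        (LinearMap.ker (matRe (Complex.exp (-(θ₀ : ℂ) * Complex.I) • A)).mulVecLin) ≤ 1) := by
  obtain ⟨P, hP, hP', hle⟩ := h.exists_isIsotropic_finrank_orthogonal_le
  obtain ⟨⟨S, hS, hSz⟩, hmax⟩ := isGreatest_zdi A
  have hdim := P.finrank_add_finrank_orthogonal
  have hPz := hmax ⟨P, hP, rfl⟩
  rw [finrank_euclideanSpace] at hdim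
  simp only [finrank_ker_matRe_smul]
  refine ⟨by omega, fun heq => ?_, fun ⟨θ, hθ⟩ => ?_⟩
  · by_contra! hker
    obtain ⟨M, hM, hlt⟩ := hP.exists_finrank_lt hP' (by omega) fun c hc => by
      obtain ⟨θ, rfl⟩ := (Complex.norm_eq_one_iff c).1 hc
      have := hker (-θ)
      rwa [Complex.ofReal_neg, neg_neg] at this
    have := hmax ⟨M, hM, rfl⟩
    omega
  · have := (hS.smul_add_adjoint (Complex.exp (-(θ : ℂ) * Complex.I))).two_mul_finrank_le
    rw [finrank_euclideanSpace] at this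
    omega

end Matrix

/-- Corollary 2.6. -/
theorem zdi_ge_ceil_half_of_unitarily_similar_neg {n : ℕ} (A : Matrix (Fin n) (Fin n) ℂ)
    (h : UnitSim A (-A)) :
    (n + 1) / 2 ≤ zdi A ∧
    (zdi A = (n + 1) / 2 ↔ ∃ θ₀ : ℝ,
      Module.finrank ℂ
        (LinearMap.ker (matRe (Complex.exp (-(θ₀ : ℂ) * Complex.I) • A)).mulVecLin) ≤ 1) := by
  simpa using zdi_ge_ceil_half_of_unitarily_similar_neg_general A h
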